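/- Let N ≥ 1, a ≥ 0, b > 0, and let M be the (N+1)×(N+1) cyclic matrix with M_{0,0} = −a, M_{i,i} = −b for 1 ≤ i ≤ N, M_{i,i+1} = b for 0 ≤ i ≤ N−1, M_{N,0} = a, and all other entries zero. Let p : [0,∞) → ℝ^{N+1} be differentiable with p'(t) = M p(t) for all t ≥ 0 and p(0) = (u_0, 0, …, 0). Then u := p_0 satisfies the memory equation u'(t) = −a·u(t) + (a·b^N/(N−1)!)·∫_0^t s^{N−1} e^{−b s} u(t−s) ds for all t ≥ 0; i.e., the single-loop Markov process yields the Gamma-kernel memory equation with equal rates b. -/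

import Mathlib

open MeasureTheory

/-!
The coordinates `p 1, …, p N` form a chain of relaxations `xᵢ' = -b xᵢ + cᵢ xᵢ₊₁` that starts at
zero and is driven by `p 0`, with gains `cᵢ = b` except for the last one, `a`. The kernels
`Kₖ(s) = sᵏ / k! * exp (-b s)` satisfy `Kₖ₊₁' = Kₖ - b Kₖ₊₁`, so if `y' = -b y + c g` and
`y(0) = 0`, integration by parts turns the convolution of `Kₖ` with `y` into `c` times that of
`Kₖ₊₁` with `g`. Going down the chain expresses `p 1` as a multiple of the convolution of
`K_{N-1}` with `p 0`, which is inserted into `p 0' = -a p 0 + b p 1`.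
-/

section Relaxation

open Set intervalIntegral

variable {E : Type*} [NormedAddCommGroup E] [NormedSpace ℝ E] [CompleteSpace E]

theorem smul_integral_smul_comp_sub_of_relaxation {b c t : ℝ} (ht : 0 ≤ t) {φ ψ : ℝ → ℝ}
    {y g : ℝ → E}
    (hφ_cont : ContinuousOn φ (Icc 0 t)) (hψ_cont : ContinuousOn ψ (Icc 0 t))
    (hy_cont : ContinuousOn y (Icc 0 t)) (hg_cont : ContinuousOn g (Icc 0 t))
    (hφ : ∀ s ∈ Ioo 0 t, HasDerivAt φ (-b * φ s + ψ s) s)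
    (hy : ∀ s ∈ Ioo 0 t, HasDerivAt y (-b • y s + c • g s) s) :
    c • ∫ s in 0..t, φ s • g (t - s) =
      φ 0 • y t - φ t • y 0 + ∫ s in 0..t, ψ s • y (t - s) := by
  have reflect {f : ℝ → E} (hf : ContinuousOn f (Icc 0 t)) :
      ContinuousOn (fun s ↦ f (t - s)) (Icc 0 t) :=
    hf.comp (by fun_prop) fun s hs ↦ ⟨sub_nonneg.2 hs.2, sub_le_self t hs.1⟩
  have hψy : IntervalIntegrable (fun s ↦ ψ s • y (t - s)) volume 0 t :=
    (hψ_cont.smul (reflect hy_cont)).intervalIntegrable_of_Icc ht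
  have hφg : IntervalIntegrable (fun s ↦ c • φ s • g (t - s)) volume 0 t :=
    ((hφ_cont.smul (reflect hg_cont)).const_smul c).intervalIntegrable_of_Icc ht
  have hderiv : ∀ s ∈ Ioo 0 t, HasDerivAt (fun s ↦ φ s • y (t - s))
      (ψ s • y (t - s) - c • φ s • g (t - s)) s := by
    intro s hs
    have hys := (hy (t - s) ⟨sub_pos.2 hs.2, sub_lt_self t hs.1⟩).comp_const_sub t s
    exact ((hφ s hs).smul hys).congr_deriv (by module)
  have hFTC := integral_eq_sub_of_hasDerivAt_of_le ht (hφ_cont.smul (reflect hy_cont)) hderiv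
    (hψy.sub hφg)
  rw [integral_sub hψy hφg, intervalIntegral.integral_smul] at hFTC
  simp only [Pi.smul_apply', sub_self, sub_zero] at hFTC
  rw [← neg_sub (φ t • y 0), ← hFTC]
  abel

/-- The Gamma (Erlang) kernel `sᵏ / k! * exp (-b s)`, the impulse response of `k + 1` successive
relaxations at rate `b`. It is not normalized: for `0 < b` its integral over `[0, ∞)` is
`1 / b ^ (k + 1)`. -/
noncomputable def gammaKernel (b : ℝ) (k : ℕ) (s : ℝ) : ℝ :=
  s ^ k / k.factorial * Real.exp (-b * s)

theorem continuous_gammaKernel (b : ℝ) (k : ℕ) : Continuous (gammaKernel b k) := by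
  unfold gammaKernel
  fun_prop

theorem gammaKernel_zero_right (b : ℝ) (k : ℕ) : gammaKernel b k 0 = if k = 0 then 1 else 0 := by
  cases k <;> simp [gammaKernel]

theorem hasDerivAt_exp_const_mul (c s : ℝ) :
    HasDerivAt (fun s ↦ Real.exp (c * s)) (c * Real.exp (c * s)) s := by
  simpa [mul_comm] using ((hasDerivAt_id s).const_mul c).exp

theorem hasDerivAt_gammaKernel_zero (b s : ℝ) :
    HasDerivAt (gammaKernel b 0) (-b * gammaKernel b 0 s) s := by
  have hexp : gammaKernel b 0 = fun s ↦ Real.exp (-b * s) := by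
    ext s
    simp [gammaKernel]
  rw [hexp]
  exact hasDerivAt_exp_const_mul (-b) s

theorem hasDerivAt_gammaKernel_succ (b : ℝ) (k : ℕ) (s : ℝ) :
    HasDerivAt (gammaKernel b (k + 1)) (-b * gammaKernel b (k + 1) s + gammaKernel b k s) s := by
  have hpow := (hasDerivAt_pow (k + 1) s).div_const ((k + 1).factorial : ℝ)
  refine (hpow.mul (hasDerivAt_exp_const_mul (-b) s)).congr_deriv ?_
  simp only [gammaKernel, Nat.factorial_succ, Nat.cast_mul, Nat.add_sub_cancel]
  field_simp
  ring

theorem smul_integral_gammaKernel_zero_of_relaxation {b c t : ℝ} (ht : 0 ≤ t) {y g : ℝ → E}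
    (hy_cont : ContinuousOn y (Icc 0 t)) (hg_cont : ContinuousOn g (Icc 0 t))
    (hy : ∀ s ∈ Ioo 0 t, HasDerivAt y (-b • y s + c • g s) s) (hy0 : y 0 = 0) :
    c • ∫ s in 0..t, gammaKernel b 0 s • g (t - s) = y t := by
  simpa [hy0, gammaKernel_zero_right] using
    smul_integral_smul_comp_sub_of_relaxation (ψ := 0) ht (continuous_gammaKernel b 0).continuousOn
      continuousOn_const hy_cont hg_cont
      (fun s _ ↦ by simpa using hasDerivAt_gammaKernel_zero b s) hy

theorem smul_integral_gammaKernel_succ_of_relaxation {b c t : ℝ} (ht : 0 ≤ t) (k : ℕ)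
    {y g : ℝ → E} (hy_cont : ContinuousOn y (Icc 0 t)) (hg_cont : ContinuousOn g (Icc 0 t))
    (hy : ∀ s ∈ Ioo 0 t, HasDerivAt y (-b • y s + c • g s) s) (hy0 : y 0 = 0) :
    c • ∫ s in 0..t, gammaKernel b (k + 1) s • g (t - s) =
      ∫ s in 0..t, gammaKernel b k s • y (t - s) := by
  simpa [hy0, gammaKernel_zero_right] using
    smul_integral_smul_comp_sub_of_relaxation ht (continuous_gammaKernel b (k + 1)).continuousOn
      (continuous_gammaKernel b k).continuousOn hy_cont hg_cont
      (fun s _ ↦ hasDerivAt_gammaKernel_succ b k s) hy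

theorem relaxation_chain_eq_integral {b t : ℝ} (ht : 0 ≤ t) {n : ℕ} (c : Fin (n + 1) → ℝ)
    (x : Fin (n + 2) → ℝ → E) (hx_cont : ∀ i, ContinuousOn (x i) (Icc 0 t))
    (hx : ∀ i : Fin (n + 1), ∀ s ∈ Ioo 0 t,
      HasDerivAt (x i.castSucc) (-b • x i.castSucc s + c i • x i.succ s) s)
    (hx0 : ∀ i : Fin (n + 1), x i.castSucc 0 = 0) :
    x 0 t = (∏ i, c i) • ∫ s in 0..t, gammaKernel b n s • x (Fin.last (n + 1)) (t - s) := by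
  induction n with
  | zero =>
    simpa using (smul_integral_gammaKernel_zero_of_relaxation ht (hx_cont 0) (hx_cont 1)
      (hx 0) (hx0 0)).symm
  | succ n ih =>
    have hprefix := ih (fun i ↦ c i.castSucc) (fun i ↦ x i.castSucc) (fun i ↦ hx_cont _)
      (fun i ↦ hx i.castSucc) (fun i ↦ hx0 _)
    have hlast := smul_integral_gammaKernel_succ_of_relaxation ht n (hx_cont _) (hx_cont _)
      (hx (Fin.last _)) (hx0 _)
    rw [Fin.castSucc_zero] at hprefix
    rw [hprefix, ← hlast, smul_smul, ← Fin.prod_univ_castSucc, Fin.succ_last]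

end Relaxation

section Loop

open Matrix

/-- The transposed generator of the single-loop process on `z₀, …, z_N` that jumps from `z₀` to
`z_N` at rate `a` and from `zᵢ₊₁` to `zᵢ` at rate `b`. -/
def loopGenerator {R : Type*} [Ring R] (N : ℕ) (a b : R) : Matrix (Fin (N + 1)) (Fin (N + 1)) R :=
  Matrix.of fun i j : Fin (N + 1) =>
    if (i : ℕ) = 0 ∧ (j : ℕ) = 0 then -a
    else if (i : ℕ) = (j : ℕ) then -b
    else if (j : ℕ) = (i : ℕ) + 1 then b
    else if (i : ℕ) = N ∧ (j : ℕ) = 0 then a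
    else 0

theorem loopGenerator_mulVec_zero {R : Type*} [Ring R] {n : ℕ} (a b : R) (v : Fin (n + 2) → R) :
    (loopGenerator (n + 1) a b *ᵥ v) 0 = -a * v 0 + b * v 1 := by
  simp [loopGenerator, mulVec, dotProduct, Fin.sum_univ_succ]

/-- Addition in `Fin (n + 2)` is cyclic, so that `(Fin.last n).succ + 1 = 0`. -/
theorem loopGenerator_succ_apply {R : Type*} [Ring R] {n : ℕ} (a b : R) (i : Fin (n + 1))
    (j : Fin (n + 2)) :
    loopGenerator (n + 1) a b i.succ j =
      if j = i.succ then -b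
      else if j = i.succ + 1 then (if i = Fin.last n then a else b)
      else 0 := by
  have hnext : ((i.succ + 1 : Fin (n + 2)) : ℕ) = if i = Fin.last n then 0 else (i : ℕ) + 2 := by
    simp [Fin.val_add_one]
  simp only [loopGenerator, Matrix.of_apply, Fin.ext_iff, Fin.val_succ, Fin.val_last] at hnext ⊢
  grind

theorem loopGenerator_mulVec_succ {R : Type*} [Ring R] {n : ℕ} (a b : R) (v : Fin (n + 2) → R)
    (i : Fin (n + 1)) :
    (loopGenerator (n + 1) a b *ᵥ v) i.succ =
      -b * v i.succ + (if i = Fin.last n then a else b) * v (i.succ + 1) := by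
  rw [mulVec, dotProduct, Fintype.sum_eq_add i.succ (i.succ + 1) (by simp)]
  · simp [loopGenerator_succ_apply]
  · rintro j ⟨hj, hj_next⟩
    simp [loopGenerator_succ_apply, hj, hj_next]

theorem coord_one_eq_integral_of_loopGenerator {n : ℕ} (a b : ℝ) {p : ℝ → Fin (n + 2) → ℝ}
    (hp : ∀ t, 0 ≤ t → HasDerivAt p (loopGenerator (n + 1) a b *ᵥ p t) t)
    (hp0 : ∀ i : Fin (n + 1), p 0 i.succ = 0) {t : ℝ} (ht : 0 ≤ t) :
    p t 1 = b ^ n * a * ∫ s in 0..t, gammaKernel b n s * p (t - s) 0 := by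
  have hcoord (i) {s : ℝ} (hs : 0 ≤ s) := hasDerivAt_pi.1 (hp s hs) i
  have hchain := relaxation_chain_eq_integral (b := b) ht
    (fun i : Fin (n + 1) ↦ if i = Fin.last n then a else b) (fun i s ↦ p s (i + 1))
    (fun i s hs ↦ (hcoord _ hs.1).continuousAt.continuousWithinAt)
    (fun i s hs ↦ by
      simpa [Fin.coeSucc_eq_succ, loopGenerator_mulVec_succ] using hcoord i.succ hs.1.le)
    (fun i ↦ by simpa [Fin.coeSucc_eq_succ] using hp0 i)
  simpa [Fin.prod_univ_castSucc, Fin.castSucc_ne_last] using hchain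

end Loop

theorem stmt_18_general {n : ℕ} (a b : ℝ) {p : ℝ → Fin (n + 2) → ℝ}
    (hp : ∀ t, 0 ≤ t → HasDerivAt p ((loopGenerator (n + 1) a b).mulVec (p t)) t)
    (hp0 : ∀ i : Fin (n + 1), p 0 i.succ = 0) {t : ℝ} (ht : 0 ≤ t) :
    HasDerivAt (fun s ↦ p s 0)
      (-a * p t 0 + a * b ^ (n + 1) / n.factorial *
        ∫ s in 0..t, s ^ n * Real.exp (-b * s) * p (t - s) 0) t := by
  refine (hasDerivAt_pi.1 (hp t ht) 0).congr_deriv ?_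
  rw [loopGenerator_mulVec_zero, coord_one_eq_integral_of_loopGenerator a b hp hp0 ht]
  have hkernel (s : ℝ) : gammaKernel b n s * p (t - s) 0 =
      (n.factorial : ℝ)⁻¹ * (s ^ n * Real.exp (-b * s) * p (t - s) 0) := by
    rw [gammaKernel]
    ring
  simp only [hkernel, intervalIntegral.integral_const_mul]
  ring

/-- **Single loop gives the Gamma-kernel memory equation.**  The first component of the
single-loop Markov process with equal rates `b` satisfies
`u' = −a u + (a bᴺ/(N−1)!) ∫₀ᵗ s^{N−1} e^{−bs} u(t−s) ds`. -/
theorem stmt_18 (N : ℕ) (hN : 1 ≤ N) (a b : ℝ) (ha : 0 ≤ a) (hb : 0 < b) (u₀ : ℝ)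
    (M : Matrix (Fin (N + 1)) (Fin (N + 1)) ℝ)
    (hM : M = Matrix.of fun i j : Fin (N + 1) =>
      if (i : ℕ) = 0 ∧ (j : ℕ) = 0 then -a
      else if (i : ℕ) = (j : ℕ) then -b
      else if (j : ℕ) = (i : ℕ) + 1 then b
      else if (i : ℕ) = N ∧ (j : ℕ) = 0 then a
      else 0)
    (p : ℝ → Fin (N + 1) → ℝ)
    (hp : ∀ t : ℝ, 0 ≤ t → HasDerivAt p (M.mulVec (p t)) t)
    (hp0 : p 0 = fun i : Fin (N + 1) => if (i : ℕ) = 0 then u₀ else 0) :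
    ∀ t : ℝ, 0 ≤ t →
      HasDerivAt (fun s => p s 0)
        (-a * p t 0 + a * b ^ N / (Nat.factorial (N - 1)) *
          ∫ s in (0:ℝ)..t, s ^ (N - 1) * Real.exp (-b * s) * p (t - s) 0) t := by
  obtain ⟨n, rfl⟩ := Nat.exists_eq_add_of_le' hN
  subst hM
  exact fun t ht ↦ stmt_18_general a b hp (fun i ↦ by simp [hp0]) ht
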